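/- Let A ∈ GL(Γ) with characteristic polynomial χ_A irreducible over ℚ, having r real eigenvalues and 2c non-real complex eigenvalues (r + 2c = dim V). Then the centralizer of A in GL(Γ) is an abelian group isomorphic to F × ℤ^{r+c-1} for some finite group F. -/

import Mathlib

open Polynomial NumberField

theorem aux_group {G U : Type} [Group G] [CommGroup U] [Module.Finite ℤ (Additive U)]
    (φ : G →* U) (hφ : Function.Injective φ) (hn : ∀ u : U, ∃ n : ℕ, 0 < n ∧ u ^ n ∈ φ.range)
    (d : ℕ) (hd : Module.finrank ℤ (Additive U) = d) :
    ∃ (F : Type) (_ : CommGroup F) (_ : Fintype F),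
      Nonempty (G ≃* F × Multiplicative (Fin d → ℤ)) := by
  let S : Submodule ℤ (Additive U) := AddSubgroup.toIntSubmodule (Subgroup.toAddSubgroup φ.range)
  have hS : Module.finrank ℤ S = d := by
    have h := S.finrank_quotient_add_finrank
    have ht : Module.IsTorsion ℤ (Additive U ⧸ S) := by
      intro x
      obtain ⟨u, rfl⟩ := S.mkQ_surjective x
      obtain ⟨n, hn0, hn⟩ := hn u.toMul
      refine ⟨⟨(n : ℤ), mem_nonZeroDivisors_of_ne_zero (by exact_mod_cast hn0.ne')⟩, ?_⟩
      change (n : ℤ) • S.mkQ u = 0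
      rw [← map_smul, Submodule.mkQ_apply, Submodule.Quotient.mk_eq_zero]
      rw [natCast_zsmul]
      exact hn
    rw [ht.finrank_eq_zero] at h
    omega
  have : Module.Finite ℤ S := inferInstance
  have : AddGroup.FG S := Module.Finite.iff_addGroup_fg.mp this
  obtain ⟨n, ι, _, p, hp, e, ⟨f⟩⟩ := AddCommGroup.equiv_free_prod_directSum_zmod S
  have hne : ∀ i, NeZero (p i ^ e i) := fun i => ⟨pow_ne_zero _ (hp i).ne_zero⟩
  classical
  let g := f.trans ((Finsupp.linearEquivFunOnFinite ℤ ℤ (Fin n)).toAddEquiv.prodCongr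
    (DirectSum.addEquivProd (fun i => ZMod (p i ^ e i))))
  have hnd : n = d := by
    let l : S →ₗ[ℤ] (Fin n → ℤ) := (LinearMap.fst ℤ _ _).comp g.toIntLinearEquiv.toLinearMap
    have hl : Function.Surjective l := Prod.fst_surjective.comp g.surjective
    have h := l.ker.finrank_quotient_add_finrank
    rw [(l.quotKerEquivOfSurjective hl).finrank_eq] at h
    have ht : Module.IsTorsion ℤ (LinearMap.ker l) := by
      rintro ⟨x, hx⟩
      let N := ∏ i, p i ^ e i
      have hN : N ≠ 0 := Finset.prod_ne_zero_iff.mpr fun i _ => (hne i).out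
      refine ⟨⟨(N : ℤ), mem_nonZeroDivisors_of_ne_zero (by exact_mod_cast hN)⟩, ?_⟩
      apply Subtype.ext
      change (N : ℤ) • x = 0
      apply g.injective
      rw [map_zsmul, map_zero]
      have hx1 : (g x).1 = 0 := hx
      apply Prod.ext
      · rw [Prod.smul_fst, hx1, smul_zero]; rfl
      · ext i
        rw [Prod.smul_snd, natCast_zsmul]
        change N • ((g x).2 i) = 0
        obtain ⟨k, hk⟩ := Finset.dvd_prod_of_mem (fun i => p i ^ e i) (Finset.mem_univ i)
        simp only [N]
        rw [hk, mul_comm, mul_smul, nsmul_eq_mul (p i ^ e i), ZMod.natCast_self, zero_mul, smul_zero]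
    rw [ht.finrank_eq_zero, hS] at h
    simpa using h
  subst hnd
  refine ⟨Multiplicative (∀ i, ZMod (p i ^ e i)), inferInstance, inferInstance, ⟨?_⟩⟩
  let g' : φ.range ≃* Multiplicative ((Fin n → ℤ) × (∀ i, ZMod (p i ^ e i))) :=
    { toFun := fun x => Multiplicative.ofAdd (g ⟨Additive.ofMul x.1, x.2⟩)
      invFun := fun y => ⟨((g.symm y.toAdd).1 : Additive U).toMul, (g.symm y.toAdd).2⟩
      left_inv := fun x => by simp
      right_inv := fun y => by simp
      map_mul' := fun x y => by
        rw [← ofAdd_add, ← map_add]; rfl }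
  exact (MonoidHom.ofInjective hφ).trans (g'.trans
    ((AddEquiv.toMultiplicative AddEquiv.prodComm).trans (MulEquiv.prodMultiplicative _ _)))

theorem aux_real (f : ℚ[X]) [hf : Fact (Irreducible f)] :
    InfinitePlace.nrRealPlaces (AdjoinRoot f) = (f.map (algebraMap ℚ ℝ)).roots.card := by
  classical
  rw [← InfinitePlace.card_real_embeddings]
  let e : {φ : AdjoinRoot f →+* ℂ // ComplexEmbedding.IsReal φ} ≃ {x // x ∈ f.aroots ℝ} :=
    Equiv.trans
    { toFun := fun φ => φ.2.embedding.toRatAlgHom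
      invFun := fun ψ => ⟨Complex.ofRealHom.comp ψ.toRingHom, by
        rw [ComplexEmbedding.isReal_iff]; ext x <;> simp⟩
      left_inv := fun φ => by
        apply Subtype.ext; apply RingHom.ext; intro x
        exact ComplexEmbedding.IsReal.coe_embedding_apply φ.2 x
      right_inv := fun ψ => by
        apply AlgHom.ext; intro x
        apply Complex.ofReal_injective
        exact ComplexEmbedding.IsReal.coe_embedding_apply
          (φ := Complex.ofRealHom.comp ψ.toRingHom) (by
            rw [ComplexEmbedding.isReal_iff]; ext x <;> simp) x } (AdjoinRoot.equiv ℝ ℚ f hf.out.ne_zero)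
  have hs : (f.map (algebraMap ℚ ℝ)).roots.Nodup :=
    nodup_roots (hf.out.separable.map)
  rw [Fintype.card_congr (e.trans (Equiv.subtypeEquivRight (q := fun x => x ∈ (f.aroots ℝ).toFinset) (by simp)))]
  rw [Fintype.card_coe, Multiset.toFinset_card_of_nodup hs]

theorem aux_int (K : Type) [Field K] [NumberField K] (m : ℕ)
    (ι : K →ₐ[ℚ] Matrix (Fin m) (Fin m) ℚ) : ∃ N : ℕ, 0 < N ∧ ∀ x : 𝓞 K,
      ∃ B : Matrix (Fin m) (Fin m) ℤ, B.map (Int.castRingHom ℚ) = ι ((N : K) * x) := by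
  obtain ⟨⟨N, hN⟩, h⟩ := IsLocalization.exist_integer_multiples_of_finite (nonZeroDivisors ℤ)
    (S := ℚ) (fun t : Module.Free.ChooseBasisIndex ℤ (𝓞 K) × Fin m × Fin m =>
      ι (RingOfIntegers.basis K t.1 : K) t.2.1 t.2.2)
  have hN0 : N ≠ 0 := nonZeroDivisors.ne_zero hN
  choose c hc using h
  refine ⟨N.natAbs, Int.natAbs_pos.mpr hN0, fun x => ?_⟩
  let S : Submodule ℤ K :=
    { carrier := {k | ∃ B : Matrix (Fin m) (Fin m) ℤ, B.map (Int.castRingHom ℚ) = ι k}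
      add_mem' := by
        rintro a b ⟨B, hB⟩ ⟨C, hC⟩
        refine ⟨B + C, ?_⟩
        rw [map_add, ← hB, ← hC]; ext; simp
      zero_mem' := ⟨0, by ext; simp⟩
      smul_mem' := by
        rintro a b ⟨B, hB⟩
        refine ⟨a • B, ?_⟩
        rw [map_zsmul, ← hB]; ext; simp [Matrix.smul_apply, -zsmul_eq_mul]; simp }
  have key : (N : K) * x ∈ S := by
    have hx := (RingOfIntegers.basis K).sum_repr x
    rw [← hx]
    simp only [map_sum, Finset.mul_sum]
    refine Submodule.sum_mem _ fun i _ => ?_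
    rw [zsmul_eq_mul, map_mul, map_intCast, mul_left_comm, ← zsmul_eq_mul]
    refine S.smul_mem _ ⟨Matrix.of fun j k => c (i, j, k), ?_⟩
    rw [← zsmul_eq_mul, map_zsmul]
    ext j k
    have := hc (i, j, k)
    simpa using this
  rcases Int.natAbs_eq N with h | h
  · have e : ((N.natAbs : ℕ) : K) = N := by
      conv_rhs => rw [h]
      simp
    rw [e]; exact key
  · have e : ((N.natAbs : ℕ) : K) = -N := by
      conv_rhs => rw [h]
      simp
    rw [e, neg_mul]; exact S.neg_mem key

theorem aux_main (K : Type) [Field K] [NumberField K] (m : ℕ) (A : GL (Fin m) ℤ)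
    (ι : K →ₐ[ℚ] Matrix (Fin m) (Fin m) ℚ) (a : K) 
    (ha : ι a = (A : Matrix (Fin m) (Fin m) ℤ).map (Int.castRingHom ℚ))
    (hgen : ∀ k : K, ∃ p : ℚ[X], k = aeval a p)
    (hm : 0 < m) (hrk : Module.finrank ℚ K = m) :
    ∃ φ : Subgroup.centralizer {A} →* (𝓞 K)ˣ, Function.Injective φ ∧
      ∀ u : (𝓞 K)ˣ, ∃ n : ℕ, 0 < n ∧ u ^ n ∈ φ.range := by
  have : Nonempty (Fin m) := ⟨⟨0, hm⟩⟩
  have hι : Function.Injective ι := ι.toRingHom.injective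
  let q : Matrix (Fin m) (Fin m) ℤ →+* Matrix (Fin m) (Fin m) ℚ := (Int.castRingHom ℚ).mapMatrix
  have hq : Function.Injective q := fun B C h => by
    ext i j
    have := congrFun (congrFun h i) j
    simpa [q] using this
  have ha' : ι a = q A := ha
  -- commutant
  have hcomm : ∀ B : Matrix (Fin m) (Fin m) ℚ, B * ι a = ι a * B → ∃ k, ι k = B := by
    intro B hB
    have hB' : ∀ k, B * ι k = ι k * B := by
      intro k
      obtain ⟨p, rfl⟩ := hgen k
      rw [← aeval_algHom_apply]
      induction p using Polynomial.induction_on' with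
      | add p q hp hq => rw [map_add, mul_add, add_mul, hp, hq]
      | monomial n c =>
        rw [aeval_monomial]
        have h1 : Commute B (algebraMap ℚ (Matrix (Fin m) (Fin m) ℚ) c) := (Algebra.commutes c B).symm
        exact h1.mul_right (Commute.pow_right hB n)
    let v : Fin m → ℚ := Pi.single ⟨0, hm⟩ 1
    have hv : v ≠ 0 := by simp [v]
    let L : K →ₗ[ℚ] (Fin m → ℚ) :=
      { toFun := fun k => (ι k).mulVec v
        map_add' := fun x y => by rw [map_add, Matrix.add_mulVec]
        map_smul' := fun x y => by rw [map_smul, Matrix.smul_mulVec]; rfl }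
    have hL : Function.Injective L := by
      rw [← LinearMap.ker_eq_bot, LinearMap.ker_eq_bot']
      intro k hk
      by_contra hk0
      apply hv
      have : (ι k⁻¹).mulVec ((ι k).mulVec v) = 0 := by
        have : (ι k).mulVec v = 0 := hk
        rw [this, Matrix.mulVec_zero]
      rwa [Matrix.mulVec_mulVec, ← map_mul, inv_mul_cancel₀ hk0, map_one, Matrix.one_mulVec] at this
    have hLs : Function.Surjective L :=
      (LinearMap.injective_iff_surjective_of_finrank_eq_finrank (by simp [hrk])).mp hL
    obtain ⟨k, hk⟩ := hLs (B.mulVec v)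
    refine ⟨k, Matrix.mulVec_injective (funext fun w => ?_)⟩
    obtain ⟨l, rfl⟩ := hLs w
    change (ι k).mulVec ((ι l).mulVec v) = B.mulVec ((ι l).mulVec v)
    have hk' : (ι k).mulVec v = B.mulVec v := hk
    rw [Matrix.mulVec_mulVec, Matrix.mulVec_mulVec, hB', ← map_mul, mul_comm k l, map_mul,
      ← Matrix.mulVec_mulVec, ← Matrix.mulVec_mulVec, hk']
  have hint : ∀ (B : Matrix (Fin m) (Fin m) ℤ) (k : K), ι k = q B → IsIntegral ℤ k := by
    intro B k h
    have h1 : IsIntegral ℤ B := ⟨B.charpoly, B.charpoly_monic, by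
      rw [← aeval_def]; exact Matrix.aeval_self_charpoly B⟩
    have h2 : IsIntegral ℤ (ι k) := by
      rw [h]; exact h1.map q.toIntAlgHom
    exact (isIntegral_algHom_iff (ι.restrictScalars ℤ) hι).mp h2
  have hex : ∀ B : Subgroup.centralizer {A}, ∃ k : 𝓞 K, ι k = q (B : GL (Fin m) ℤ) := by
    intro B
    obtain ⟨k, hk⟩ := hcomm (q (B : GL (Fin m) ℤ)) (by
      rw [ha', ← map_mul, ← map_mul]
      have := Subgroup.mem_centralizer_singleton_iff.mp B.2
      exact congrArg (fun x : GL (Fin m) ℤ => q x) (by first | exact this | exact this.symm))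
    exact ⟨⟨k, hint _ k hk⟩, hk⟩
  choose g hg using hex
  have hinj : ∀ x y : 𝓞 K, ι x = ι y → x = y := fun x y h => RingOfIntegers.ext (hι h)
  let φ0 : Subgroup.centralizer {A} →* 𝓞 K :=
    { toFun := g
      map_one' := hinj _ _ (by rw [hg]; simp)
      map_mul' := fun x y => hinj _ _ (by rw [hg]; simp [hg]) }
  refine ⟨φ0.toHomUnits, ?_, ?_⟩
  · intro x y h
    have h1 : g x = g y := congrArg Units.val h
    apply Subtype.ext; apply Units.ext; apply hq
    rw [← hg, ← hg, h1]
  · intro u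
    obtain ⟨N, hN, hNB⟩ := aux_int K m ι
    have hI : Ideal.span {(N : 𝓞 K)} ≠ ⊥ := by
      rw [Ne, Ideal.span_singleton_eq_bot]; exact_mod_cast hN.ne'
    have : Finite (𝓞 K ⧸ Ideal.span {(N : 𝓞 K)}) := Ideal.finiteQuotientOfFreeOfNeBot _ hI
    let π := Ideal.Quotient.mk (Ideal.span {(N : 𝓞 K)})
    let n := Nat.card (𝓞 K ⧸ Ideal.span {(N : 𝓞 K)})ˣ
    have hn : 0 < n := Nat.card_pos
    refine ⟨n, hn, ?_⟩
    have hpow : ∀ w : (𝓞 K)ˣ, ∃ B : Matrix (Fin m) (Fin m) ℤ, q B = ι ((w ^ n : (𝓞 K)ˣ) : 𝓞 K) := by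
      intro w
      have h1 : (Units.map π.toMonoidHom w) ^ n = 1 := pow_card_eq_one'
      have h2 : π ((w ^ n : (𝓞 K)ˣ) : 𝓞 K) = π 1 := by
        have := congrArg Units.val h1
        simpa using this
      rw [Ideal.Quotient.eq, Ideal.mem_span_singleton] at h2
      obtain ⟨x, hx⟩ := h2
      obtain ⟨B, hB⟩ := hNB x
      refine ⟨1 + B, ?_⟩
      rw [map_add, map_one]
      have : q B = ι ((N : K) * x) := hB
      rw [this, ← map_one ι, ← map_add, sub_eq_iff_eq_add.mp hx]
      congr 1
      simp [add_comm]
    obtain ⟨B, hB⟩ := hpow u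
    obtain ⟨C, hC⟩ := hpow u⁻¹
    have hBC : B * C = 1 := hq (by
      rw [map_mul, hB, hC, ← map_mul, map_one, ← map_mul, ← Units.val_mul, ← mul_pow]; simp)
    have hCB : C * B = 1 := hq (by
      rw [map_mul, hB, hC, ← map_mul, map_one, ← map_mul, ← Units.val_mul, ← mul_pow]; simp)
    let b : GL (Fin m) ℤ := ⟨B, C, hBC, hCB⟩
    have hb : b ∈ Subgroup.centralizer {A} := by
      rw [Subgroup.mem_centralizer_singleton_iff]
      apply Units.ext; apply hq
      rw [Units.val_mul, Units.val_mul, map_mul, map_mul, ← ha']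
      change q B * _ = _ * q B
      rw [hB, ← map_mul, ← map_mul, mul_comm]
    refine ⟨⟨b, hb⟩, ?_⟩
    apply Units.ext
    apply hinj
    change ι (g ⟨b, hb⟩) = _
    rw [hg, ← hB]

/-- Let `A ∈ GL(m, ℤ)` with irreducible characteristic polynomial over `ℚ`,
having `r` real eigenvalues and `2c` non-real complex eigenvalues (`m = r + 2c`).
Then the centralizer of `A` in `GL(m, ℤ)` is an abelian group isomorphic to
`F × ℤ^(r+c-1)` for some finite (abelian) group `F`. -/
theorem stmt_5 (m : ℕ) (A : GL (Fin m) ℤ)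
    (hirr : Irreducible (((A : Matrix (Fin m) (Fin m) ℤ)).charpoly.map (Int.castRingHom ℚ)))
    (r c : ℕ)
    (hr : r = Multiset.card
      (((A : Matrix (Fin m) (Fin m) ℤ).charpoly.map (Int.castRingHom ℝ)).roots))
    (hc : m = r + 2 * c) :
    ∃ (F : Type) (_ : CommGroup F) (_ : Fintype F),
      Nonempty ((Subgroup.centralizer {A}) ≃* F × Multiplicative (Fin (r + c - 1) → ℤ)) := by
  let f : ℚ[X] := (A : Matrix (Fin m) (Fin m) ℤ).charpoly.map (Int.castRingHom ℚ)
  let AQ : Matrix (Fin m) (Fin m) ℚ := (A : Matrix (Fin m) (Fin m) ℤ).map (Int.castRingHom ℚ)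
  have hfA : f = AQ.charpoly := (Matrix.charpoly_map _ _).symm
  have : Fact (Irreducible f) := ⟨hirr⟩
  have hdeg : f.natDegree = m := by rw [hfA, Matrix.charpoly_natDegree_eq_dim]; simp
  have hm : 0 < m := by rw [← hdeg]; exact hirr.natDegree_pos
  have hrk : Module.finrank ℚ (AdjoinRoot f) = m := by
    rw [← hdeg, (AdjoinRoot.powerBasis hirr.ne_zero).finrank, AdjoinRoot.powerBasis_dim]
  let ι0 : AdjoinRoot f →+* Matrix (Fin m) (Fin m) ℚ :=
    Ideal.Quotient.lift (Ideal.span {f}) (aeval AQ : ℚ[X] →ₐ[ℚ] _).toRingHom (by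
      intro x hx
      obtain ⟨y, rfl⟩ := Ideal.mem_span_singleton.mp hx
      change aeval AQ (f * y) = 0
      rw [map_mul, hfA, Matrix.aeval_self_charpoly, zero_mul])
  let ι : AdjoinRoot f →ₐ[ℚ] Matrix (Fin m) (Fin m) ℚ := ι0.toRatAlgHom
  have hι : ι (AdjoinRoot.root f) = AQ := by
    change aeval AQ X = AQ
    simp
  obtain ⟨φ, h1, h2⟩ := aux_main (AdjoinRoot f) m A ι (AdjoinRoot.root f) hι (fun k => by
    obtain ⟨p, rfl⟩ := AdjoinRoot.mk_surjective k
    exact ⟨p, (AdjoinRoot.aeval_eq p).symm⟩) hm hrk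
  refine aux_group φ h1 h2 _ ?_
  rw [NumberField.Units.finrank_eq, NumberField.Units.rank,
    InfinitePlace.card_eq_nrRealPlaces_add_nrComplexPlaces]
  have hre : InfinitePlace.nrRealPlaces (AdjoinRoot f) = r := by
    rw [aux_real, hr, Polynomial.map_map]
    congr 3
  have := InfinitePlace.card_add_two_mul_card_eq_rank (AdjoinRoot f)
  rw [hrk] at this
  omega
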